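/- arXiv:2106.04483 — 2 statements merged into one kernel-verified Lean document; each statement's English description precedes it below -/
import Mathlib

section
/- Consider a CDS instance in which every node is incident to at most two qualified edges (equivalently, the qualified edges within each qualified connected component form a path or a cycle) and whose minimum connected edge cover number ρ is finite. Then for every prime p with p ≥ 2ρ−2, there exists a linear CDS scheme for this instance over the field F_p with secret length L = ρ−1 and signal length N = ρ; consequently the linear rate (ρ−1)/(2ρ) is achievable and, combined with the converse bound ρL ≤ (ρ−1)N, the linear capacity equals (ρ−1)/(2ρ). -/
/-!
Write `n = ρ - 1`. All signals use noise matrices whose rows are standard basis vectors, that is,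
every node `v` is assigned `ρ` noise symbols, and on symbol `k` it adds the secret combination
`s k v • (1, c k, …, c k ^ (n - 1))`. Such a scheme is secure when unqualified neighbours have equal
scalars `s k v = s k u` on each shared symbol, and correct when qualified neighbours have different
scalars on `n` shared symbols with distinct evaluation points `c k`, since a Vandermonde matrix is
invertible (`scheme_of_data`).

Different qualified components get disjoint noise symbols, so that only pairs within a component
matter. Since degrees are at most two, a component is a path or a cycle (`exists_linearComponent`).
Going along it, the node in position `i` uses the symbols `i, …, i + n`, taken modulo the length
for a cycle. The nodes using a fixed symbol then form a window of at most `ρ` consecutive nodes,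
spanned by at most `n` qualified edges. By the definition of `ρ` none of these edges
has its ends connected by unqualified edges inside the window (`not_reachable`); hence `s k` can be
chosen to be constant on the unqualified components of the window and to take different values on
different components (`exists_separating_labels`). Consecutive nodes share `n` consecutive symbols,
and `2 * n` evaluation points suffice to make any `n` cyclically consecutive ones distinct
(`cyclicColor_injOn`); this is where `p ≥ 2ρ - 2` is needed. Components with fewer than `ρ` nodes,
for which cyclic windows would be too long, use one common set of `ρ` symbols for all nodes.
-/


open Matrix

/-- The row space of a matrix: the span of its rows in `Fin LZ → F`. -/
noncomputable def rowSpan {F : Type} [Field F] {N LZ : ℕ}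
    (H : Matrix (Fin N) (Fin LZ) F) : Submodule F (Fin LZ → F) :=
  Submodule.span F (Set.range H)

/-- Linear correctness condition for a (qualified) pair of nodes. -/
def CorrectPair (F : Type) [Field F] (L N LZ : ℕ)
    (Fv Fu : Matrix (Fin N) (Fin L) F) (Hv Hu : Matrix (Fin N) (Fin LZ) F) : Prop :=
  ∀ (k : ℕ) (Pv Pu : Matrix (Fin k) (Fin N) F),
    Pv * Hv = Pu * Hu →
    Pv.rank = Module.finrank F ↥(rowSpan Hv ⊓ rowSpan Hu) →
    Pu.rank = Module.finrank F ↥(rowSpan Hv ⊓ rowSpan Hu) →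
    (Pv * Fv - Pu * Fu).rank = L

/-- Linear security condition for an (unqualified) pair of nodes. -/
def SecurePair (F : Type) [Field F] (L N LZ : ℕ)
    (Fv Fu : Matrix (Fin N) (Fin L) F) (Hv Hu : Matrix (Fin N) (Fin LZ) F) : Prop :=
  ∀ (k : ℕ) (Pv Pu : Matrix (Fin k) (Fin N) F),
    Pv * Hv = Pu * Hu → Pv * Fv = Pu * Fu

/-- A CDS instance: a bipartite graph with qualified and unqualified edges. -/
structure CDSInstance (V : Type) where
  isA : V → Prop
  qual : V → V → Prop
  unqual : V → V → Prop
  qual_symm : ∀ v u, qual v u → qual u v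
  unqual_symm : ∀ v u, unqual v u → unqual u v
  qual_bip : ∀ v u, qual v u → (isA v ↔ ¬ isA u)
  unqual_bip : ∀ v u, unqual v u → (isA v ↔ ¬ isA u)

/-- An unqualified path: a list of nodes joined consecutively by unqualified
edges, with all the (unordered) edges distinct. -/
def IsUnqualPath {V : Type} (I : CDSInstance V) (P : List V) : Prop :=
  2 ≤ P.length ∧ P.Chain' I.unqual ∧
    (List.zipWith (fun a b => s(a, b)) P P.tail).Nodup

/-- An unordered edge all of whose representatives are qualified. -/
def IsQualEdge {V : Type} (I : CDSInstance V) (e : Sym2 V) : Prop :=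
  ∃ a b, e = s(a, b) ∧ I.qual a b

/-- A connected edge cover `M` of the node set of an unqualified path `P`, with
respect to an internal qualified edge `{a, b}` of `P`. -/
def IsConnCover {V : Type} (I : CDSInstance V) (a b : V) (P : List V)
    (M : Finset (Sym2 V)) : Prop :=
  s(a, b) ∈ M ∧
  (∀ e ∈ M, IsQualEdge I e) ∧
  (∀ x y : V, (∃ e ∈ M, x ∈ e) → (∃ e ∈ M, y ∈ e) →
      Relation.ReflTransGen (fun w z => s(w, z) ∈ M) x y) ∧
  (∀ v ∈ P, ∃ e ∈ M, v ∈ e)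

/-- `ρ(e, P)`: the minimum size of a connected edge cover (`+∞` if none exists). -/
noncomputable def rhoEP {V : Type} (I : CDSInstance V) (a b : V) (P : List V) : ℕ∞ :=
  sInf ((fun M : Finset (Sym2 V) => (M.card : ℕ∞)) '' {M | IsConnCover I a b P M})

/-- `ρ`: the minimum of `ρ(e, P)` over all internal qualified edges `e` of
unqualified paths `P`. -/
noncomputable def rho {V : Type} (I : CDSInstance V) : ℕ∞ :=
  sInf {x : ℕ∞ | ∃ a b P, IsUnqualPath I P ∧ I.qual a b ∧ a ∈ P ∧ b ∈ P ∧
    x = rhoEP I a b P}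

/-- A linear CDS scheme for a CDS instance. -/
def IsLinearCDSScheme {V : Type} (F : Type) [Field F] (L N LZ : ℕ) (I : CDSInstance V)
    (Fm : V → Matrix (Fin N) (Fin L) F) (Hm : V → Matrix (Fin N) (Fin LZ) F) : Prop :=
  (∀ v, (Hm v).rank = N) ∧
  (∀ v u, I.qual v u → CorrectPair F L N LZ (Fm v) (Fm u) (Hm v) (Hm u)) ∧
  (∀ v u, I.unqual v u → SecurePair F L N LZ (Fm v) (Fm u) (Hm v) (Hm u))

/-! ### From noise symbols and labels to a scheme -/

/-- The linear algebra of the construction. Node `v` uses the noise symbols indexed by the range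
of `K v`, and adds the secret combination `s k v • (1, c k, c k ^ 2, …)` to noise symbol `k`.
Security asks that unqualified neighbours agree on every shared symbol. For correctness, a
qualified pair must disagree on `n` shared symbols with distinct `c k`: the differences are then
nonzero multiples of the rows of an invertible Vandermonde matrix. -/
theorem scheme_of_data {V : Type} (I : CDSInstance V) {F : Type} [Field F] {r n LZ : ℕ}
    (K : V → Fin r → Fin LZ) (hK : ∀ v, Function.Injective (K v))
    (s : Fin LZ → V → F) (c : Fin LZ → F)
    (hsec : ∀ v u, I.unqual v u → ∀ i j, K v i = K u j → s (K v i) v = s (K v i) u)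
    (hcor : ∀ v u, I.qual v u → ∃ κ : Fin n → Fin LZ, Function.Injective (c ∘ κ) ∧
      ∀ a, κ a ∈ Set.range (K v) ∧ κ a ∈ Set.range (K u) ∧ s (κ a) v ≠ s (κ a) u) :
    ∃ (Fm : V → Matrix (Fin r) (Fin n) F) (Hm : V → Matrix (Fin r) (Fin LZ) F),
      IsLinearCDSScheme F n r LZ I Fm Hm := by
  classical
  let H : V → Matrix (Fin r) (Fin LZ) F := fun v => (1 : Matrix _ _ F).submatrix (K v) id
  let S : V → Matrix (Fin LZ) (Fin n) F := fun v => Matrix.of fun k j => s k v * c k ^ (j : ℕ)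
  -- The signal matrices are `H v * S v`, so `P * (H v * S v)` only depends on `P * H v`.
  have hHH : ∀ v, H v * (H v)ᵀ = 1 := by
    intro v
    ext i j
    simp [H, Matrix.mul_apply, Matrix.one_apply, (hK v).eq_iff]
  have hHr : ∀ v k (X : Matrix (Fin k) (Fin r) F), (X * H v).rank = X.rank := by
    intro v k X
    apply le_antisymm (Matrix.rank_mul_le_left _ _)
    have := Matrix.rank_mul_le_left (X * H v) (H v)ᵀ
    rwa [Matrix.mul_assoc, hHH, Matrix.mul_one] at this
  have hrow : ∀ v i, H v i = Pi.single (K v i) 1 := by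
    intro v i
    ext j
    simp [H, Matrix.one_apply, Pi.single_apply, eq_comm]
  have hXK : ∀ v k (X : Matrix (Fin k) (Fin r) F) a b, (X * H v) a b ≠ 0 → ∃ i, K v i = b := by
    intro v k X a b hne
    by_contra! hcon
    apply hne
    simp only [Matrix.mul_apply, H, Matrix.submatrix_apply, Matrix.one_apply, id]
    exact Finset.sum_eq_zero fun i _ => by simp [hcon i]
  refine ⟨fun v => H v * S v, H, ?_, ?_, ?_⟩
  · intro v
    simpa using hHr v r 1
  · intro v u hq k Pv Pu hP hPv _
    obtain ⟨κ, hc, hκ⟩ := hcor v u hq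
    simp only [← Matrix.mul_assoc]
    rw [← hP, ← Matrix.mul_sub]
    set X := Pv * H v with hX
    -- The rows of `X` span all of the common noise space, by a dimension count.
    have hspan : Submodule.span F (Set.range X.row) = rowSpan (H v) ⊓ rowSpan (H u) := by
      apply Submodule.eq_of_le_of_finrank_eq
      · rw [Submodule.span_le]
        rintro _ ⟨a, rfl⟩
        have hmem : ∀ (w : V) (P : Matrix (Fin k) (Fin r) F), (P * H w).row a ∈ rowSpan (H w) := by
          intro w P
          have : (P * H w).row a = ∑ i, P a i • H w i := by
            ext j
            simp [Matrix.mul_apply, Matrix.row]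
          rw [this]
          exact Submodule.sum_mem _ fun i _ =>
            Submodule.smul_mem _ _ (Submodule.subset_span ⟨i, rfl⟩)
        refine ⟨hmem v Pv, ?_⟩
        have := hmem u Pu
        rwa [← hP] at this
      · rw [← Matrix.rank_eq_finrank_span_row, hX, hHr, hPv]
    have hsel : ∀ a, ∃ y : Fin k → F, y ᵥ* X = Pi.single (κ a) 1 := by
      intro a
      have : (Pi.single (κ a) 1 : Fin LZ → F) ∈ Submodule.span F (Set.range X.row) := by
        rw [hspan]
        obtain ⟨⟨i, hi⟩, ⟨j, hj⟩, _⟩ := hκ a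
        exact ⟨Submodule.subset_span ⟨i, by rw [hrow, hi]⟩,
          Submodule.subset_span ⟨j, by rw [hrow, hj]⟩⟩
      rw [← range_vecMulLinear] at this
      exact this
    choose Y hY using hsel
    have hYX : (Matrix.of Y * X) * (S v - S u) =
        Matrix.diagonal (fun a => s (κ a) v - s (κ a) u) * Matrix.vandermonde (c ∘ κ) := by
      have : Matrix.of Y * X = Matrix.of fun a => Pi.single (κ a) 1 := by
        funext a
        exact hY a
      rw [this]
      ext a b
      simp [Matrix.mul_apply, Pi.single_apply, S, Matrix.vandermonde_apply, sub_mul,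
        Matrix.diagonal_apply]
    have hunit : IsUnit (Matrix.diagonal (fun a => s (κ a) v - s (κ a) u) *
        Matrix.vandermonde (c ∘ κ)) := by
      rw [Matrix.isUnit_iff_isUnit_det, Matrix.det_mul, Matrix.det_diagonal, isUnit_iff_ne_zero]
      refine mul_ne_zero (Finset.prod_ne_zero_iff.2 fun a _ => sub_ne_zero.2 (hκ a).2.2) ?_
      exact Matrix.det_vandermonde_ne_zero_iff.2 hc
    apply le_antisymm
    · simpa using Matrix.rank_le_width (X * (S v - S u))
    · have h1 := Matrix.rank_of_isUnit _ hunit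
      rw [← hYX, Matrix.mul_assoc] at h1
      have h2 := Matrix.rank_mul_le_right (Matrix.of Y) (X * (S v - S u))
      rw [h1] at h2
      simpa using h2
  · intro v u hq k Pv Pu hP
    simp only [← Matrix.mul_assoc]
    rw [← hP]
    ext a j
    simp only [Matrix.mul_apply (M := Pv * H v)]
    refine Finset.sum_congr rfl fun b _ => ?_
    by_cases hb : (Pv * H v) a b = 0
    · simp [hb]
    obtain ⟨i, hi⟩ := hXK _ _ _ _ _ hb
    rw [hP] at hb
    obtain ⟨i', hi'⟩ := hXK _ _ _ _ _ hb
    have := hsec v u hq i i' (hi.trans hi'.symm)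
    rw [hi] at this
    simp [S, this]

/-! ### Evaluation points -/

/-- A colouring of the cyclic sequence `0, …, M - 1` by fewer than `2 * n` colours: repeat
`0, …, n - 1` as long as a full block fits, and give the fewer than `n` leftover indices the
fresh colours `n, n + 1, …`. -/
def cyclicColor (n M k : ℕ) : ℕ :=
  if k < n * (M / n) then k % n else n + k % n

theorem cyclicColor_lt {n : ℕ} (hn : 0 < n) (M k : ℕ) : cyclicColor n M k < 2 * n := by
  have := Nat.mod_lt k hn
  unfold cyclicColor
  split_ifs <;> omega

/-- Any `n` cyclically consecutive indices receive distinct colours. -/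
theorem cyclicColor_injOn {n M : ℕ} (hn : 0 < n) (hM : n ≤ M) (i : ℕ) {a b : ℕ}
    (ha : a < n) (hb : b < n)
    (h : cyclicColor n M ((i + a) % M) = cyclicColor n M ((i + b) % M)) : a = b := by
  wlog hab : a < b generalizing a b
  · rcases Nat.lt_trichotomy a b with h1 | h1 | h1
    · exact this ha hb h h1
    · exact h1
    · exact (this hb ha h.symm h1).symm
  exfalso
  have hM0 : 0 < M := by omega
  have hx := Nat.mod_lt (i + a) hM0
  have hy := Nat.mod_lt (i + b) hM0
  -- The two indices differ by `b - a < n` going forward around the cycle.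
  have hcyc : (i + b) % M = (i + a) % M + (b - a) ∨
      (i + b) % M + M = (i + a) % M + (b - a) := by
    have h1 : (i + b) % M = ((i + a) % M + (b - a)) % M := by
      rw [Nat.mod_add_mod]; congr 1; omega
    rcases lt_or_ge ((i + a) % M + (b - a)) M with h2 | h2
    · left; rw [h1, Nat.mod_eq_of_lt h2]
    · right
      rw [h1, Nat.mod_eq_sub_mod h2, Nat.mod_eq_of_lt (by omega)]; omega
  generalize (i + a) % M = x at *
  generalize (i + b) % M = y at *
  have hq : n * (M / n) + M % n = M := Nat.div_add_mod M n
  have hlt := Nat.mod_lt M hn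
  have hxd := Nat.div_add_mod x n
  have hyd := Nat.div_add_mod y n
  have hxl := Nat.mod_lt x hn
  have hyl := Nat.mod_lt y hn
  unfold cyclicColor at h
  -- `omega` needs to know that distinct multiples of `n` are at least `n` apart.
  have key : ∀ u v : ℕ, n * u < n * v → n * u + n ≤ n * v := by
    intro u v huv
    have : u < v := Nat.lt_of_mul_lt_mul_left huv
    calc n * u + n = n * (u + 1) := by ring
      _ ≤ n * v := Nat.mul_le_mul_left n this
  have k1 := key (x / n) (y / n)
  have k2 := key (y / n) (x / n)
  have k3 := key (x / n) (M / n)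
  have k4 := key (y / n) (M / n)
  have k5 := key (M / n) (x / n)
  have k6 := key (M / n) (y / n)
  generalize n * (x / n) = X at *
  generalize n * (y / n) = Y at *
  generalize n * (M / n) = Q at *
  split_ifs at h <;> omega

/-! ### Separation inside short windows -/

/-- The graph of unqualified edges with both ends in `W`; nodes outside `W` are isolated. -/
def unqualGraph {V : Type} (I : CDSInstance V) (W : Set V) : SimpleGraph V where
  Adj x y := x ∈ W ∧ y ∈ W ∧ I.unqual x y
  symm := ⟨fun _ _ h => ⟨h.2.1, h.1, I.unqual_symm _ _ h.2.2⟩⟩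
  loopless := ⟨fun x h => by have := I.unqual_bip x x h.2.2; tauto⟩

theorem walk_support_mem {V : Type} {I : CDSInstance V} {W : Set V} {x y : V}
    (w : (unqualGraph I W).Walk x y) (hx : x ∈ W) : ∀ z ∈ w.support, z ∈ W := by
  induction w with
  | nil => simpa using hx
  | cons h q ih =>
    intro z hz
    rw [SimpleGraph.Walk.support_cons, List.mem_cons] at hz
    rcases hz with rfl | hz
    exacts [hx, ih h.2.1 z hz]

/-- Two distinct nodes connected by unqualified edges inside `W` lie on an unqualified path
inside `W`. -/
theorem exists_unqualPath {V : Type} (I : CDSInstance V) {W : Set V} {x y : V} (hxy : x ≠ y)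
    (hx : x ∈ W) (h : (unqualGraph I W).Reachable x y) :
    ∃ P : List V, IsUnqualPath I P ∧ x ∈ P ∧ y ∈ P ∧ ∀ z ∈ P, z ∈ W := by
  classical
  obtain ⟨w, hw⟩ := h.exists_isPath
  refine ⟨w.support, ⟨?_, ?_, ?_⟩, w.start_mem_support, w.end_mem_support,
    walk_support_mem w hx⟩
  · rw [SimpleGraph.Walk.length_support]
    have : w.length ≠ 0 := fun h0 => hxy (SimpleGraph.Walk.eq_of_length_eq_zero h0)
    omega
  · exact w.isChain_adj_support.imp fun _ _ h => h.2.2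
  · rw [← SimpleGraph.Walk.edges_eq_zipWith_support]
    exact hw.isTrail.edges_nodup

theorem rho_le {V : Type} (I : CDSInstance V) {a b : V} {P : List V} {M : Finset (Sym2 V)}
    (hP : IsUnqualPath I P) (hab : I.qual a b) (ha : a ∈ P) (hb : b ∈ P)
    (hM : IsConnCover I a b P M) : rho I ≤ M.card := by
  have h1 : rho I ≤ rhoEP I a b P := csInf_le' ⟨a, b, P, hP, hab, ha, hb, rfl⟩
  have h2 : rhoEP I a b P ≤ M.card := csInf_le' ⟨M, hM, rfl⟩
  exact h1.trans h2

/-- The only use of `ρ`. If a window `W` is contained in a qualified walk `w 0, …, w l` and is so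
short that the edges of the walk together with the qualified edge `{x, y}` number fewer than `r`,
then `x` and `y` are not connected by unqualified edges inside `W`: otherwise these edges would be
a connected edge cover of an unqualified path from `x` to `y`. -/
theorem not_reachable {V : Type} (I : CDSInstance V) {r : ℕ} (hr : rho I = r)
    (w : ℕ → V) (l : ℕ) (hw : ∀ i < l, I.qual (w i) (w (i + 1))) {W : Set V}
    (hW : ∀ x ∈ W, ∃ i ≤ l, w i = x) {x y : V} (hx : x ∈ W) (hy : y ∈ W)
    (hxy : I.qual x y)
    (hl : l + 1 < r ∨ (l < r ∧ ∃ i < l, s(w i, w (i + 1)) = s(x, y))) :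
    ¬ (unqualGraph I W).Reachable x y := by
  classical
  intro hreach
  have hne : x ≠ y := by
    rintro rfl
    have := I.qual_bip x x hxy
    tauto
  obtain ⟨P, hP, hxP, hyP, hPW⟩ := exists_unqualPath I hne hx hreach
  set E : Finset (Sym2 V) := (Finset.range l).image fun i => s(w i, w (i + 1)) with hE
  have hEc : E.card ≤ l := Finset.card_image_le.trans (by simp)
  have hmemE : ∀ i < l, s(w i, w (i + 1)) ∈ E := fun i hi =>
    Finset.mem_image.2 ⟨i, Finset.mem_range.2 hi, rfl⟩
  have hMc : (insert s(x, y) E).card < r := by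
    rcases hl with hl | ⟨hl, i, hi, hie⟩
    · have := Finset.card_insert_le s(x, y) E
      omega
    · rw [Finset.insert_eq_of_mem (hie ▸ hmemE i hi)]
      omega
  have hl0 : 0 < l := by
    rcases Nat.eq_zero_or_pos l with rfl | h
    · obtain ⟨i, hi, rfl⟩ := hW x hx
      obtain ⟨j, hj, rfl⟩ := hW y hy
      exact absurd (by rw [Nat.le_zero.1 hi, Nat.le_zero.1 hj]) hne
    · exact h
  have hnode : ∀ z, (∃ e ∈ insert s(x, y) E, z ∈ e) → ∃ i ≤ l, w i = z := by
    rintro z ⟨e, he, hz⟩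
    rcases Finset.mem_insert.1 he with rfl | he
    · rcases Sym2.mem_iff.1 hz with rfl | rfl
      exacts [hW _ hx, hW _ hy]
    · obtain ⟨i, hi, rfl⟩ := Finset.mem_image.1 he
      rw [Finset.mem_range] at hi
      rcases Sym2.mem_iff.1 hz with rfl | rfl
      exacts [⟨i, by omega, rfl⟩, ⟨i + 1, by omega, rfl⟩]
  have hconn : ∀ i ≤ l,
      Relation.ReflTransGen (fun a b => s(a, b) ∈ insert s(x, y) E) (w 0) (w i) := by
    intro i
    induction i with
    | zero => exact fun _ => .refl
    | succ i ih =>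
      exact fun hi => (ih (by omega)).tail (Finset.mem_insert_of_mem (hmemE i (by omega)))
  have hconn' : ∀ i ≤ l,
      Relation.ReflTransGen (fun a b => s(a, b) ∈ insert s(x, y) E) (w i) (w 0) := by
    intro i
    induction i with
    | zero => exact fun _ => .refl
    | succ i ih =>
      refine fun hi => .head ?_ (ih (by omega))
      have := Finset.mem_insert_of_mem (b := s(x, y)) (hmemE i (by omega))
      rwa [Sym2.eq_swap (a := w i)] at this
  have hcover : IsConnCover I x y P (insert s(x, y) E) := by
    refine ⟨Finset.mem_insert_self _ _, ?_, ?_, ?_⟩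
    · intro e he
      rcases Finset.mem_insert.1 he with rfl | he
      · exact ⟨x, y, rfl, hxy⟩
      · obtain ⟨i, hi, rfl⟩ := Finset.mem_image.1 he
        exact ⟨_, _, rfl, hw i (Finset.mem_range.1 hi)⟩
    · intro a b ha hb
      obtain ⟨i, hi, rfl⟩ := hnode a ha
      obtain ⟨j, hj, rfl⟩ := hnode b hb
      exact (hconn' i hi).trans (hconn j hj)
    · intro z hz
      obtain ⟨i, hi, rfl⟩ := hW z (hPW z hz)
      rcases Nat.lt_or_ge i l with hil | hil
      · exact ⟨_, Finset.mem_insert_of_mem (hmemE i hil), Sym2.mem_mk_left _ _⟩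
      · obtain ⟨i, rfl⟩ : ∃ j, i = j + 1 := ⟨i - 1, by omega⟩
        exact ⟨_, Finset.mem_insert_of_mem (hmemE i (by omega)), Sym2.mem_mk_right _ _⟩
  have := rho_le I hP hxy hxP hyP hcover
  rw [hr] at this
  exact absurd (by exact_mod_cast this) (not_le.2 hMc)

/-- Labels in `𝔽_p` that tell apart exactly the unqualified components of `W`. -/
theorem exists_separating_labels {V : Type} [Fintype V] (I : CDSInstance V) {p : ℕ} [NeZero p]
    (W : Set V) (hW : W.ncard ≤ p) :
    ∃ s : V → ZMod p, ∀ x ∈ W, ∀ y ∈ W, s x = s y ↔ (unqualGraph I W).Reachable x y := by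
  classical
  let T : Set (unqualGraph I W).ConnectedComponent :=
    (unqualGraph I W).connectedComponentMk '' W
  have hT : T.ncard ≤ p := (Set.ncard_image_le W.toFinite).trans hW
  have hc : Nat.card T ≤ Nat.card (ZMod p) := by
    rw [Nat.card_zmod]; exact hT
  obtain ⟨g⟩ : Nonempty (T ↪ ZMod p) := by
    have := Fintype.ofFinite T
    apply Function.Embedding.nonempty_of_card_le
    rwa [← Nat.card_eq_fintype_card, ← Nat.card_eq_fintype_card]
  refine ⟨fun x => if h : x ∈ W then g ⟨_, Set.mem_image_of_mem _ h⟩ else 0, ?_⟩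
  intro x hx y hy
  simp [hx, hy, SimpleGraph.ConnectedComponent.eq]

/-! ### Qualified components are paths or cycles -/

/-- `f 0, …, f (m - 1)` enumerates without repetition a set of nodes closed under qualified edges,
in which consecutive nodes are qualified pairs and the only other possible qualified pair is the
first with the last node. So this set is a qualified component, and a path or a cycle. -/
structure IsLinearComponent {V : Type} (I : CDSInstance V) (m : ℕ) (f : ℕ → V) : Prop where
  pos : 0 < m
  inj : ∀ i < m, ∀ j < m, f i = f j → i = j
  chain : ∀ i, i + 1 < m → I.qual (f i) (f (i + 1))
  closed : ∀ i < m, ∀ y, I.qual (f i) y → ∃ j < m, f j = y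
  edge : ∀ i j, i < j → j < m → I.qual (f i) (f j) → j = i + 1 ∨ (i = 0 ∧ j + 1 = m)

/-- When degrees are at most two, every node lies in a path or cycle component: a qualified path
through `v` with the most nodes cannot be extended at its ends, and its interior nodes have no
further neighbours. -/
theorem exists_linearComponent {V : Type} [Fintype V] (I : CDSInstance V)
    (hdeg : ∀ v : V, Set.ncard {u : V | I.qual v u} ≤ 2) (v : V) :
    ∃ m f, IsLinearComponent I m f ∧ ∃ i < m, f i = v := by
  classical
  -- `Q m`: there is a qualified path with `m` distinct nodes through `v`.
  let Q : ℕ → Prop := fun m => ∃ f : ℕ → V, (∀ i < m, ∀ j < m, f i = f j → i = j) ∧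
    (∀ i, i + 1 < m → I.qual (f i) (f (i + 1))) ∧ ∃ i < m, f i = v
  have hQ1 : Q 1 := ⟨fun _ => v, by intros; omega, by intros; omega, 0, by omega, rfl⟩
  have hQb : ∀ m, Q m → m ≤ Fintype.card V := by
    rintro m ⟨f, hf, -⟩
    have := Fintype.card_le_of_injective (fun i : Fin m => f i)
      (fun i j h => Fin.ext (hf i i.2 j j.2 h))
    simpa using this
  let m := Nat.findGreatest Q (Fintype.card V)
  have hm : Q m := Nat.findGreatest_spec (hQb 1 hQ1) hQ1
  have hmax : ¬ Q (m + 1) := fun h => by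
    have : m + 1 ≤ m := Nat.le_findGreatest (hQb _ h) h
    omega
  clear_value m
  obtain ⟨f, hinj, hchain, i₀, hi₀, hv⟩ := hm
  have hlast : ∀ y, I.qual (f (m - 1)) y → ∃ j < m, f j = y := by
    intro y hy
    by_contra! hcon
    refine hmax ⟨fun i => if i < m then f i else y, ?_, ?_, i₀, by omega, by simp [hi₀, hv]⟩
    · intro i hi j hj h
      dsimp only at h
      split_ifs at h with h1 h2 h2
      · exact hinj i h1 j h2 h
      · exact absurd h (hcon i h1)
      · exact absurd h.symm (hcon j h2)
      · omega
    · intro i hi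
      dsimp only
      rw [if_pos (by omega)]
      split_ifs with h
      · exact hchain i h
      · obtain rfl : i = m - 1 := by omega
        exact hy
  have hfirst : ∀ y, I.qual (f 0) y → ∃ j < m, f j = y := by
    intro y hy
    by_contra! hcon
    refine hmax ⟨fun i => if i = 0 then y else f (i - 1), ?_, ?_, i₀ + 1, by omega, by simp [hv]⟩
    · intro i hi j hj h
      dsimp only at h
      split_ifs at h with h1 h2 h2
      · omega
      · exact absurd h.symm (hcon (j - 1) (by omega))
      · exact absurd h (hcon (i - 1) (by omega))
      · have := hinj (i - 1) (by omega) (j - 1) (by omega) h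
        omega
    · intro i hi
      dsimp only
      rw [if_neg (by omega : ¬ i + 1 = 0)]
      split_ifs with h
      · subst h
        exact I.qual_symm _ _ hy
      · have := hchain (i - 1) (by omega)
        rwa [show i - 1 + 1 = i by omega] at this
  -- An interior vertex already has two neighbours on the path, so it has no others.
  have hint : ∀ i, 0 < i → i + 1 < m → ∀ y, I.qual (f i) y → y = f (i - 1) ∨ y = f (i + 1) := by
    intro i h0 hi y hy
    by_contra! hcon
    have hne : f (i - 1) ≠ f (i + 1) := fun h => by
      have := hinj _ (by omega) _ (by omega) h
      omega
    have hprev : I.qual (f i) (f (i - 1)) := by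
      have := hchain (i - 1) (by omega)
      rw [show i - 1 + 1 = i by omega] at this
      exact I.qual_symm _ _ this
    have hsub : ({y, f (i - 1), f (i + 1)} : Set V) ⊆ {u | I.qual (f i) u} := by
      rintro z (rfl | rfl | rfl)
      exacts [hy, hprev, hchain i hi]
    have h3 : ({y, f (i - 1), f (i + 1)} : Set V).ncard = 3 :=
      Set.ncard_eq_three.2 ⟨_, _, _, hcon.1, hcon.2, hne, rfl⟩
    have := Set.ncard_le_ncard hsub (Set.toFinite _)
    have := hdeg (f i)
    omega
  refine ⟨m, f, ⟨by omega, hinj, hchain, ?_, ?_⟩, i₀, hi₀, hv⟩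
  · intro i hi y hy
    rcases Nat.eq_zero_or_pos i with rfl | h0
    · exact hfirst y hy
    · rcases Nat.lt_or_ge (i + 1) m with h1 | h1
      · rcases hint i h0 h1 y hy with rfl | rfl
        exacts [⟨_, by omega, rfl⟩, ⟨_, by omega, rfl⟩]
      · obtain rfl : i = m - 1 := by omega
        exact hlast y hy
  · intro i j hij hj hq
    rcases Nat.eq_zero_or_pos i with rfl | h0
    · rcases Nat.lt_or_ge (j + 1) m with h1 | h1
      · left
        rcases hint j hij h1 _ (I.qual_symm _ _ hq) with h | h
        · have := hinj _ (by omega) _ (by omega) h; omega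
        · have := hinj _ (by omega) _ (by omega) h; omega
      · right; omega
    · left
      rcases hint i h0 (by omega) _ hq with h | h
      · have := hinj _ (by omega) _ (by omega) h; omega
      · exact hinj _ (by omega) _ (by omega) h

/-- The graph of all qualified edges. -/
def qualGraph {V : Type} (I : CDSInstance V) : SimpleGraph V where
  Adj x y := I.qual x y
  symm := ⟨fun _ _ h => I.qual_symm _ _ h⟩
  loopless := ⟨fun x h => by have := I.qual_bip x x h; tauto⟩

theorem IsLinearComponent.mem_of_reachable {V : Type} {I : CDSInstance V} {m : ℕ} {f : ℕ → V}
    (hf : IsLinearComponent I m f) {x y : V} (hx : ∃ i < m, f i = x)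
    (h : (qualGraph I).Reachable x y) : ∃ i < m, f i = y := by
  obtain ⟨w⟩ := h
  induction w with
  | nil => exact hx
  | cons h q ih =>
    obtain ⟨i, hi, rfl⟩ := hx
    exact ih (hf.closed i hi _ h)

/-! ### Noise allocation in one component -/

theorem eq_mod_of_add_mod {M q j k : ℕ} (hq : q < M) (hj : j < M) (h : (q + j) % M = k) :
    (k + M - j) % M = q := by
  rcases lt_or_ge (q + j) M with h1 | h1
  · rw [Nat.mod_eq_of_lt h1] at h
    rw [show k + M - j = q + M by omega, Nat.add_mod_right, Nat.mod_eq_of_lt hq]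
  · rw [Nat.mod_eq_sub_mod h1, Nat.mod_eq_of_lt (by omega)] at h
    rw [show k + M - j = q by omega, Nat.mod_eq_of_lt hq]

/-- The nodes of `C` using noise index `k`, when a node `x` uses the `r` cyclically consecutive
indices `off x, …, off x + r - 1` modulo `M`. -/
def windowNodes {V : Type} (C : Set V) (off : V → ℕ) (r M k : ℕ) : Set V :=
  {x | x ∈ C ∧ ∃ j < r, (off x + j) % M = k}

/-- Noise allocation for one qualified component `C`: there are a modulus `M` and offsets such that
few nodes share a noise index, and every qualified pair shares `n` cyclically consecutive indices
`i, …, i + n - 1` for each of which it is separated inside the window of that index. -/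
theorem exists_windows {V : Type} (I : CDSInstance V) {n : ℕ}
    (hr : rho I = ((n + 1 : ℕ) : ℕ∞)) {m : ℕ} {f : ℕ → V} (hf : IsLinearComponent I m f)
    {C : Set V} (hC : ∀ x, x ∈ C ↔ ∃ i < m, f i = x) :
    ∃ (M : ℕ) (off : V → ℕ), n + 1 ≤ M ∧
      (∀ k, (windowNodes C off (n + 1) M k).ncard ≤ n + 1) ∧
      ∀ x ∈ C, ∀ y ∈ C, I.qual x y → ∃ i, ∀ j < n,
        x ∈ windowNodes C off (n + 1) M ((i + j) % M) ∧
        y ∈ windowNodes C off (n + 1) M ((i + j) % M) ∧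
        ¬ (unqualGraph I (windowNodes C off (n + 1) M ((i + j) % M))).Reachable x y := by
  classical
  rcases Nat.lt_or_ge m (n + 1) with hm | hm
  -- A small component: all of its nodes share one noise space of dimension `n + 1`.
  · refine ⟨n + 1, fun _ => 0, le_rfl, ?_, ?_⟩
    · intro k
      have hsub : windowNodes C (fun _ => 0) (n + 1) (n + 1) k ⊆
          ((Finset.range m).image f : Finset V) := by
        rintro x ⟨hx, -⟩
        obtain ⟨i, hi, rfl⟩ := (hC x).1 hx
        simpa using ⟨i, hi, rfl⟩
      have h1 := Set.ncard_le_ncard hsub (Finset.finite_toSet _)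
      rw [Set.ncard_coe_finset] at h1
      have h2 : ((Finset.range m).image f).card ≤ m := Finset.card_image_le.trans (by simp)
      omega
    · intro x hx y hy hq
      refine ⟨0, fun j hj => ?_⟩
      have hx' : x ∈ windowNodes C (fun _ => 0) (n + 1) (n + 1) ((0 + j) % (n + 1)) :=
        ⟨hx, j, by omega, rfl⟩
      have hy' : y ∈ windowNodes C (fun _ => 0) (n + 1) (n + 1) ((0 + j) % (n + 1)) :=
        ⟨hy, j, by omega, rfl⟩
      have hpos := hf.pos
      refine ⟨hx', hy', not_reachable I hr f (m - 1) (fun i hi => hf.chain i (by omega)) ?_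
        hx' hy' hq (Or.inl (by omega))⟩
      rintro z ⟨hz, -⟩
      obtain ⟨i, hi, rfl⟩ := (hC z).1 hz
      exact ⟨i, by omega, rfl⟩
  have hpos : ∀ x, ∃ i, x ∈ C → i < m ∧ f i = x := by
    intro x
    by_cases hx : x ∈ C
    · obtain ⟨i, hi⟩ := (hC x).1 hx
      exact ⟨i, fun _ => hi⟩
    · exact ⟨0, fun h => absurd h hx⟩
  choose pos hpos using hpos
  have hcard : ∀ M, m ≤ M → ∀ k, (windowNodes C pos (n + 1) M k).ncard ≤ n + 1 := by
    intro M hM k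
    have hsub : windowNodes C pos (n + 1) M k ⊆
        ((Finset.range (n + 1)).image (fun j => f ((k + M - j) % M)) : Finset V) := by
      rintro x ⟨hx, j, hj, hk⟩
      obtain ⟨h1, h2⟩ := hpos x hx
      rw [Finset.mem_coe, Finset.mem_image]
      exact ⟨j, Finset.mem_range.2 hj, by
        rw [eq_mod_of_add_mod (by omega) (by omega) hk, h2]⟩
    have h1 := Set.ncard_le_ncard hsub (Finset.finite_toSet _)
    rw [Set.ncard_coe_finset] at h1
    exact h1.trans (Finset.card_image_le.trans (by simp))
  -- If the offset of a node is its position and `pos x + 1 = pos y` modulo `M`, then `x` and `y`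
  -- share the `n` indices from `pos y` on. It remains to exhibit each such window as part of a
  -- qualified walk with at most `n` edges, one of which is `{x, y}`.
  have hreduce : ∀ M, m ≤ M →
      (∀ x ∈ C, ∀ y ∈ C, I.qual x y → pos x < pos y →
        (pos x + 1) % M = pos y ∨ (pos y + 1) % M = pos x) →
      (∀ x ∈ C, ∀ y ∈ C, I.qual x y → (pos x + 1) % M = pos y → ∀ j < n,
        ∃ (w : ℕ → V) (l : ℕ), l ≤ n ∧ (∀ i < l, I.qual (w i) (w (i + 1))) ∧
          (∀ z ∈ windowNodes C pos (n + 1) M ((pos y + j) % M), ∃ i ≤ l, w i = z) ∧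
          ∃ i < l, w i = x ∧ w (i + 1) = y) →
      ∀ x ∈ C, ∀ y ∈ C, I.qual x y → ∃ i, ∀ j < n,
        x ∈ windowNodes C pos (n + 1) M ((i + j) % M) ∧
        y ∈ windowNodes C pos (n + 1) M ((i + j) % M) ∧
        ¬ (unqualGraph I (windowNodes C pos (n + 1) M ((i + j) % M))).Reachable x y := by
    intro M hM hsucc hwin
    have main : ∀ x ∈ C, ∀ y ∈ C, I.qual x y → (pos x + 1) % M = pos y → ∀ j < n,
        x ∈ windowNodes C pos (n + 1) M ((pos y + j) % M) ∧
        y ∈ windowNodes C pos (n + 1) M ((pos y + j) % M) ∧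
        ¬ (unqualGraph I (windowNodes C pos (n + 1) M ((pos y + j) % M))).Reachable x y := by
      intro x hx y hy hq hxy j hj
      have hy' : y ∈ windowNodes C pos (n + 1) M ((pos y + j) % M) := ⟨hy, j, by omega, rfl⟩
      have hx' : x ∈ windowNodes C pos (n + 1) M ((pos y + j) % M) := by
        refine ⟨hx, j + 1, by omega, ?_⟩
        rw [← hxy, Nat.mod_add_mod]
        congr 1
        omega
      obtain ⟨w, l, hl, hw, hW, i, hi, rfl, rfl⟩ := hwin x hx y hy hq hxy j hj
      exact ⟨hx', hy', not_reachable I hr w l hw hW hx' hy' hq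
        (Or.inr ⟨by omega, i, hi, rfl⟩)⟩
    have main' : ∀ x ∈ C, ∀ y ∈ C, I.qual x y → (pos y + 1) % M = pos x → ∀ j < n,
        x ∈ windowNodes C pos (n + 1) M ((pos x + j) % M) ∧
        y ∈ windowNodes C pos (n + 1) M ((pos x + j) % M) ∧
        ¬ (unqualGraph I (windowNodes C pos (n + 1) M ((pos x + j) % M))).Reachable x y := by
      intro x hx y hy hq hxy j hj
      obtain ⟨h1, h2, h3⟩ := main y hy x hx (I.qual_symm _ _ hq) hxy j hj
      exact ⟨h2, h1, fun h => h3 h.symm⟩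
    intro x hx y hy hq
    rcases Nat.lt_trichotomy (pos x) (pos y) with h | h | h
    · rcases hsucc x hx y hy hq h with h | h
      exacts [⟨_, main x hx y hy hq h⟩, ⟨_, main' x hx y hy hq h⟩]
    · have : x = y := by rw [← (hpos x hx).2, ← (hpos y hy).2, h]
      subst this
      have := I.qual_bip x x hq
      tauto
    · rcases hsucc y hy x hx (I.qual_symm _ _ hq) h with h | h
      exacts [⟨_, main' x hx y hy hq h⟩, ⟨_, main x hx y hy hq h⟩]
  have hedge : ∀ x ∈ C, ∀ y ∈ C, I.qual x y → pos x < pos y →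
      pos y = pos x + 1 ∨ (pos x = 0 ∧ pos y + 1 = m) := by
    intro x hx y hy hq hlt
    refine hf.edge _ _ hlt (hpos y hy).1 ?_
    rwa [(hpos x hx).2, (hpos y hy).2]
  by_cases hcyc : I.qual (f (m - 1)) (f 0)
  -- A long cycle: windows wrap around modulo `m`.
  · refine ⟨m, pos, hm, hcard m le_rfl, hreduce m le_rfl ?_ ?_⟩
    · intro x hx y hy hq hlt
      have hy' := (hpos y hy).1
      rcases hedge x hx y hy hq hlt with h | ⟨h1, h2⟩
      · left; rw [← h, Nat.mod_eq_of_lt hy']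
      · right; rw [h1, h2, Nat.mod_self]
    · intro x hx y hy hq hxy j hj
      have hx1 := hpos x hx
      have hy1 := hpos y hy
      set k := (pos y + j) % m with hk
      have hchain : ∀ a, I.qual (f (a % m)) (f ((a + 1) % m)) := by
        intro a
        have ha := Nat.mod_lt a hf.pos
        rw [← Nat.mod_add_mod]
        rcases Nat.lt_or_ge (a % m + 1) m with h | h
        · rw [Nat.mod_eq_of_lt h]
          exact hf.chain _ h
        · rw [show a % m + 1 = m by omega, Nat.mod_self, show a % m = m - 1 by omega]
          exact hcyc
      refine ⟨fun i => f ((k + m - n + i) % m), n, le_rfl, fun i _ => hchain _, ?_, ?_⟩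
      · rintro z ⟨hz, j', hj', hk'⟩
        refine ⟨n - j', by omega, ?_⟩
        dsimp only
        rw [show k + m - n + (n - j') = k + m - j' by omega,
          eq_mod_of_add_mod (hpos z hz).1 (by omega) hk', (hpos z hz).2]
      · refine ⟨n - (j + 1), by omega, ?_, ?_⟩
        · have : (pos x + (j + 1)) % m = k := by
            rw [hk, ← hxy, Nat.mod_add_mod]; congr 1; omega
          dsimp only
          rw [show k + m - n + (n - (j + 1)) = k + m - (j + 1) by omega,
            eq_mod_of_add_mod hx1.1 (by omega) this, hx1.2]
        · dsimp only
          rw [show k + m - n + (n - (j + 1) + 1) = k + m - j by omega,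
            eq_mod_of_add_mod hy1.1 (by omega) hk.symm, hy1.2]
  -- A long path: with `n` extra noise indices no window wraps around.
  · refine ⟨m + n, pos, by omega, hcard _ (by omega), hreduce _ (by omega) ?_ ?_⟩
    · intro x hx y hy hq hlt
      have hx1 := hpos x hx
      have hy1 := hpos y hy
      rcases hedge x hx y hy hq hlt with h | ⟨h1, h2⟩
      · left; rw [← h, Nat.mod_eq_of_lt (by omega)]
      · refine absurd ?_ hcyc
        rw [show m - 1 = pos y by omega, ← h1, hx1.2, hy1.2]
        exact I.qual_symm _ _ hq
    · intro x hx y hy hq hxy j hj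
      have hx1 := hpos x hx
      have hy1 := hpos y hy
      rw [Nat.mod_eq_of_lt (by omega)] at hxy
      rw [Nat.mod_eq_of_lt (by omega)]
      set k := pos y + j with hk
      refine ⟨fun i => f (k - n + i), min k (m - 1) - (k - n), by omega,
        fun i hi => hf.chain _ (by omega), ?_, ?_⟩
      · rintro z ⟨hz, j', hj', hk'⟩
        have hz1 := hpos z hz
        rw [Nat.mod_eq_of_lt (by omega)] at hk'
        refine ⟨pos z - (k - n), by omega, ?_⟩
        dsimp only
        rw [show k - n + (pos z - (k - n)) = pos z by omega, hz1.2]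
      · refine ⟨pos x - (k - n), by omega, ?_, ?_⟩
        · dsimp only
          rw [show k - n + (pos x - (k - n)) = pos x by omega, hx1.2]
        · dsimp only
          rw [show k - n + (pos x - (k - n) + 1) = pos y by omega, hy1.2]

/-! ### The scheme -/

/-- **Theorem 2 (achievability for paths and cycles).** Consider a CDS instance in
which every node is incident to at most two qualified edges (so the qualified edges
of each qualified component form a path or a cycle) and whose minimum connected
edge cover number `ρ` is finite. Then for every prime `p ≥ 2ρ − 2` there is a
linear CDS scheme over `𝔽_p` with secret length `L = ρ − 1` and signal length
`N = ρ`, achieving the linear rate `(ρ−1)/(2ρ)`. -/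
theorem cds_path_cycle_achievability {V : Type} [Fintype V]
    (I : CDSInstance V) (r : ℕ) (hr : rho I = (r : ℕ∞))
    (hdeg : ∀ v : V, Set.ncard {u : V | I.qual v u} ≤ 2)
    (p : ℕ) [hp : Fact p.Prime] (hp2 : 2 * r - 2 ≤ p) :
    ∃ (LZ : ℕ), 0 < LZ ∧
      ∃ (Fm : V → Matrix (Fin r) (Fin (r - 1)) (ZMod p))
        (Hm : V → Matrix (Fin r) (Fin LZ) (ZMod p)),
        IsLinearCDSScheme (ZMod p) (r - 1) r LZ I Fm Hm := by
  classical
  have hV : Nonempty V := by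
    by_contra hcon
    rw [not_nonempty_iff] at hcon
    have : rho I = ⊤ := by
      rw [rho, sInf_eq_top]
      rintro x ⟨a, -⟩
      exact hcon.elim a
    rw [hr] at this
    exact ENat.natCast_ne_top r this
  rcases Nat.lt_or_ge 1 r with hr1 | hr1
  swap
  -- For `r ≤ 1` the secret is empty, and any noise matrices of full row rank do.
  · refine ⟨r + 1, by omega, ?_⟩
    refine scheme_of_data I (fun _ => Fin.castSucc) (fun _ => Fin.castSucc_injective r)
      (fun _ _ => 0) (fun _ => 0) (by simp) fun v u _ => ?_
    have hempty : IsEmpty (Fin (r - 1)) := ⟨fun a => by have := a.2; omega⟩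
    exact ⟨fun a => hempty.elim a, fun a => hempty.elim a, fun a => hempty.elim a⟩
  obtain ⟨n, rfl⟩ : ∃ n, r = n + 1 := ⟨r - 1, by omega⟩
  rw [show n + 1 - 1 = n from rfl]
  choose m f hf hroot using exists_linearComponent I hdeg
  -- `C t` is the node set of the qualified component of `t`.
  let C : V → Set V := fun t => {x | ∃ i < m t, f t i = x}
  choose M off hM hcard hsep using fun t =>
    exists_windows I hr (hf t) (C := C t) (fun x => Iff.rfl)
  -- `rt` picks one representative per component, so that its nodes share the same noise.
  let rt : V → V := fun x => ((qualGraph I).connectedComponentMk x).out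
  have hrt : ∀ x, x ∈ C (rt x) := by
    intro x
    have hreach : (qualGraph I).Reachable (rt x) x :=
      SimpleGraph.ConnectedComponent.exact (Quot.out_eq _)
    exact (hf (rt x)).mem_of_reachable (hroot _) hreach
  have hrt_eq : ∀ x y, I.qual x y → rt x = rt y := by
    intro x y h
    have : (qualGraph I).Adj x y := h
    exact congrArg Quot.out (SimpleGraph.ConnectedComponent.sound this.reachable)
  choose s hs using fun t k => exists_separating_labels (p := p) I
    (windowNodes (C t) (off t) (n + 1) (M t) k) ((hcard t k).trans (by omega))
  -- Independent noise symbols for each component: disjoint blocks of `M t` indices.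
  let κ : Type := Σ t : V, Fin (M t)
  let e : κ ≃ Fin (Fintype.card κ) := Fintype.equivFin κ
  have hM0 : ∀ t, 0 < M t := fun t => by have := hM t; omega
  let ix : V → ℕ → κ := fun t k => ⟨t, ⟨k % M t, Nat.mod_lt _ (hM0 t)⟩⟩
  have hix : ∀ t t' k k', ix t k = ix t' k' → t = t' ∧ k % M t = k' % M t' := fun t t' k k' h =>
    ⟨congrArg Sigma.fst h, congrArg (fun z : κ => (z.2 : ℕ)) h⟩
  let sg : κ → V → ZMod p := fun z => s z.1 z.2
  let cg : κ → ZMod p := fun z => (cyclicColor n (M z.1) z.2 : ℕ)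
  refine ⟨Fintype.card κ, ?_, ?_⟩
  · obtain ⟨v⟩ := hV
    exact Fintype.card_pos_iff.2 ⟨ix v 0⟩
  refine scheme_of_data I (fun v j => e (ix (rt v) (off (rt v) v + j))) ?_
    (fun k => sg (e.symm k)) (fun k => cg (e.symm k)) ?_ ?_
  · intro v i j h
    have h1 : off (rt v) v + i ≡ off (rt v) v + j [MOD M (rt v)] := (hix _ _ _ _ (e.injective h)).2
    have h2 := Nat.ModEq.add_left_cancel' _ h1
    have := hM (rt v)
    exact Fin.ext (h2.eq_of_lt_of_lt (by omega) (by omega))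
  · intro v u hq i j h
    obtain ⟨h1, h2⟩ := hix _ _ _ _ (e.injective h)
    simp only [Equiv.symm_apply_apply]
    have hv : v ∈ windowNodes (C (rt v)) (off (rt v)) (n + 1) (M (rt v))
        ((off (rt v) v + i) % M (rt v)) := ⟨hrt v, i, i.2, rfl⟩
    have hu : u ∈ windowNodes (C (rt v)) (off (rt v)) (n + 1) (M (rt v))
        ((off (rt v) v + i) % M (rt v)) := by
      rw [h1] at h2 ⊢
      exact ⟨hrt u, j, j.2, h2.symm⟩
    refine (hs _ _ v hv u hu).2 (SimpleGraph.Adj.reachable ?_)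
    exact ⟨hv, hu, hq⟩
  · intro v u hq
    have htu := hrt_eq v u hq
    obtain ⟨i, hi⟩ := hsep (rt v) v (hrt v) u (htu ▸ hrt u) hq
    refine ⟨fun j => e (ix (rt v) (i + j)), ?_, ?_⟩
    · intro a b hab
      simp only [Function.comp_apply, Equiv.symm_apply_apply] at hab
      have hlt : ∀ k, cyclicColor n (M (rt v)) k < p := fun k =>
        (cyclicColor_lt (by omega) _ _).trans_le (by omega)
      have hnat := congrArg ZMod.val hab
      dsimp only [cg, ix] at hnat
      rw [ZMod.val_cast_of_lt (hlt _), ZMod.val_cast_of_lt (hlt _)] at hnat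
      have hMt := hM (rt v)
      exact Fin.ext (cyclicColor_injOn (by omega) (by omega) i a.2 b.2 hnat)
    · intro j
      obtain ⟨hv, hu, hne⟩ := hi j j.2
      refine ⟨?_, ?_, ?_⟩
      · obtain ⟨-, a, ha, hk⟩ := hv
        refine ⟨⟨a, ha⟩, congrArg e ?_⟩
        simp only [ix, hk]
      · obtain ⟨-, a, ha, hk⟩ := hu
        refine ⟨⟨a, ha⟩, congrArg e ?_⟩
        rw [← htu]
        simp only [ix, hk]
      · simp only [Equiv.symm_apply_apply]
        exact fun h => hne ((hs _ _ v hv u hu).1 h)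
end

section
/- Let F be a finite field and L, N, L_Z positive integers. Consider eight nodes A1, A2, A3, A4, B1, B2, B3, B4, each node v equipped with matrices F_v ∈ F^{N×L} and H_v ∈ F^{N×L_Z} where each H_v has full row rank N. Suppose the correctness condition holds for the eight pairs {A1,B1}, {A2,B1}, {A3,B1}, {A2,B2}, {A3,B2}, {A3,B3}, {A4,B3}, {A4,B4}, and the security condition holds for the five pairs {A1,B2}, {A1,B3}, {A2,B3}, {A2,B4}, {A3,B4}. Then 9·L ≤ 7·N; equivalently, the rate L/(2N) is at most 7/18. -/
/-!
Write `V v` for the row space of `H_v`. Since `H_v` has full row rank, `p ᵥ* H_v ↦ p ᵥ* F_v`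
is a well-defined linear map `φ_v` on `V v`. Security says `φ_v = φ_u` on `V v ⊓ V u`, while
correctness says that `φ_v - φ_u` maps `V v ⊓ V u` onto a space of dimension `L`. Hence every
subspace of `V v ⊓ V u` on which `φ_v` and `φ_u` agree has codimension at least `L` in it
(`CorrectPair.finrank_add_le`), and in particular `d(v,u) := dim (V v ⊓ V u) ≥ L`.

Put `a = dim (V A2 ⊓ V A3)`; it is bounded on both sides. Lower bounds for iterated intersections
come from `dim (X ⊓ Y) ≥ dim X + dim Y - dim Z` for `X, Y ≤ Z` (`finrank_add_le_inf`).

* Upper bound. Intersecting `V A2 ⊓ V A3` successively with `V B3`, `V A4`, `V B4` leaves dimension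
  at least `a + d(A3,B3) + d(A4,B3) + d(A4,B4) - 3N`. On this subspace security forces
  `φ_A3 = φ_B4 = φ_A2 = φ_B3`, so its dimension is at most `d(A3,B3) - L`. Thus `a ≤ 3N - 3L`.
* Lower bound. The subspaces `V A2 ⊓ V A3 ⊓ V B1` and `V A2 ⊓ V A3 ⊓ V B2` of `V A2 ⊓ V A3` have
  dimension at least `d(A2,B1) + d(A3,B1) - N` and `d(A2,B2) + d(A3,B2) - N`. Intersecting them, and
  then intersecting with `V A1` (inside `V B1`) and `V B3` (inside `V A3`), leaves dimension at least
  `d(A2,B1) + d(A3,B1) + d(A2,B2) + d(A3,B2) + d(A1,B1) + d(A3,B3) - 4N - a`. There security forces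
  `φ_A2 = φ_B3 = φ_A1 = φ_B2`, so this is at most `d(A2,B2) - L`. Thus `a ≥ 6L - 4N`.

Together, `6L - 4N ≤ 3N - 3L`, that is `9L ≤ 7N`.
-/

open Matrix

theorem mem_rowSpan_iff {F : Type} [Field F] {N LZ : ℕ} {H : Matrix (Fin N) (Fin LZ) F}
    {x : Fin LZ → F} : x ∈ rowSpan H ↔ ∃ p : Fin N → F, p ᵥ* H = x := by
  have h : rowSpan H = LinearMap.range H.vecMulLinear := (range_vecMulLinear H).symm
  rw [h, LinearMap.mem_range]
  rfl

theorem finrank_rowSpan {F : Type} [Field F] {N LZ : ℕ} (H : Matrix (Fin N) (Fin LZ) F) :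
    Module.finrank F (rowSpan H) = H.rank :=
  (Matrix.rank_eq_finrank_span_row H).symm

/-- `φ_v` and `φ_u` agree on `K`: any representations `p ᵥ* Hv = q ᵥ* Hu` of the same vector of `K`
give `p ᵥ* Fv = q ᵥ* Fu`. Quantifying over representations avoids choosing the maps `φ`. -/
def AgreeOn {F : Type} [Field F] {L N LZ : ℕ} (Fv Fu : Matrix (Fin N) (Fin L) F)
    (Hv Hu : Matrix (Fin N) (Fin LZ) F) (K : Submodule F (Fin LZ → F)) : Prop :=
  ∀ p q : Fin N → F, p ᵥ* Hv = q ᵥ* Hu → p ᵥ* Hv ∈ K → p ᵥ* Fv = q ᵥ* Fu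

theorem SecurePair.vecMul_eq {F : Type} [Field F] {L N LZ : ℕ}
    {Fv Fu : Matrix (Fin N) (Fin L) F} {Hv Hu : Matrix (Fin N) (Fin LZ) F}
    (h : SecurePair F L N LZ Fv Fu Hv Hu) {p q : Fin N → F} (hpq : p ᵥ* Hv = q ᵥ* Hu) :
    p ᵥ* Fv = q ᵥ* Fu := by
  have key := h 1 (Matrix.of fun _ => p) (Matrix.of fun _ => q) (by
    ext i j
    exact congrFun hpq j)
  ext j
  exact congrFun (congrFun key 0) j

/-- If the vectors `P i ᵥ* H` are linearly independent, then `P` has full row rank. -/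
theorem rank_eq_of_linearIndependent_vecMul {F : Type} [Field F] {k N LZ : ℕ}
    {P : Matrix (Fin k) (Fin N) F} {H : Matrix (Fin N) (Fin LZ) F}
    (h : LinearIndependent F fun i => P i ᵥ* H) : P.rank = k := by
  have hP : LinearIndependent F P.row := LinearIndependent.of_comp H.vecMulLinear h
  simpa using hP.rank_matrix

/-- A subspace of `V v ⊓ V u` on which `φ_v` and `φ_u` agree lies in the kernel of `φ_v - φ_u`,
which for a qualified pair has codimension `L`. -/
theorem CorrectPair.finrank_add_le {F : Type} [Field F] {L N LZ : ℕ}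
    {Fv Fu : Matrix (Fin N) (Fin L) F} {Hv Hu : Matrix (Fin N) (Fin LZ) F}
    (h : CorrectPair F L N LZ Fv Fu Hv Hu) {K : Submodule F (Fin LZ → F)}
    (hK : K ≤ rowSpan Hv ⊓ rowSpan Hu) (hE : AgreeOn Fv Fu Hv Hu K) :
    Module.finrank F K + L ≤ Module.finrank F ↥(rowSpan Hv ⊓ rowSpan Hu) := by
  set I := rowSpan Hv ⊓ rowSpan Hu with hI
  let b := Module.finBasis F I
  have hv : ∀ i, ∃ p : Fin N → F, p ᵥ* Hv = (b i : Fin LZ → F) := fun i =>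
    mem_rowSpan_iff.1 (b i).2.1
  have hu : ∀ i, ∃ p : Fin N → F, p ᵥ* Hu = (b i : Fin LZ → F) := fun i =>
    mem_rowSpan_iff.1 (b i).2.2
  choose Pv hPv using hv
  choose Pu hPu using hu
  have hb : LinearIndependent F fun i => (b i : Fin LZ → F) :=
    b.linearIndependent.map' I.subtype I.ker_subtype
  have hrank := h _ (Matrix.of Pv) (Matrix.of Pu)
    (by
      ext i j
      exact congrFun ((hPv i).trans (hPu i).symm) j)
    (rank_eq_of_linearIndependent_vecMul (by
      have : (fun i => Matrix.of Pv i ᵥ* Hv) = fun i => (b i : Fin LZ → F) := funext hPv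
      rw [this]; exact hb))
    (rank_eq_of_linearIndependent_vecMul (by
      have : (fun i => Matrix.of Pu i ᵥ* Hu) = fun i => (b i : Fin LZ → F) := funext hPu
      rw [this]; exact hb))
  -- `T` is `φ_v - φ_u` on `I`, written in the coordinates of `b`.
  set M := Matrix.of Pv * Fv - Matrix.of Pu * Fu with hM
  let T := M.vecMulLinear
  have hT : Module.finrank F (LinearMap.range T) = L := by
    rw [range_vecMulLinear]
    exact (Matrix.rank_eq_finrank_span_row M).symm.trans hrank
  have hnull := LinearMap.finrank_range_add_finrank_ker T
  rw [hT, Module.finrank_fin_fun] at hnull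
  have hcoord : ∀ (P : Fin (Module.finrank F I) → Fin N → F) (H : Matrix (Fin N) (Fin LZ) F),
      (∀ i, P i ᵥ* H = (b i : Fin LZ → F)) → ∀ x : I,
      (b.equivFun x ᵥ* Matrix.of P) ᵥ* H = (x : Fin LZ → F) := by
    intro P H hP x
    have h1 : b.equivFun x ᵥ* Matrix.of P = ∑ i, b.equivFun x i • P i :=
      Matrix.vecMul_eq_sum _ _
    have h2 := congrArg I.subtype (b.sum_equivFun x)
    simp only [map_sum, map_smul, Submodule.subtype_apply] at h2
    rw [h1, Matrix.sum_vecMul, ← h2]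
    exact Finset.sum_congr rfl fun i _ => by rw [Matrix.smul_vecMul, hP]
  have hle : (K.comap I.subtype).map b.equivFun.toLinearMap ≤ LinearMap.ker T := by
    rintro _ ⟨x, hx, rfl⟩
    have hx1 := hcoord Pv Hv hPv x
    have hx2 := hcoord Pu Hu hPu x
    have := hE _ _ (hx1.trans hx2.symm) (by rw [hx1]; exact hx)
    rw [LinearMap.mem_ker]
    change b.equivFun x ᵥ* M = 0
    rw [hM, Matrix.vecMul_sub, ← Matrix.vecMul_vecMul, ← Matrix.vecMul_vecMul, this, sub_self]
  have hdim : Module.finrank F ((K.comap I.subtype).map b.equivFun.toLinearMap) =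
      Module.finrank F K := by
    exact (LinearEquiv.finrank_map_eq b.equivFun _).trans
      (Submodule.comapSubtypeEquivOfLe hK).finrank_eq
  have := Submodule.finrank_mono hle
  omega

theorem CorrectPair.le_finrank {F : Type} [Field F] {L N LZ : ℕ}
    {Fv Fu : Matrix (Fin N) (Fin L) F} {Hv Hu : Matrix (Fin N) (Fin LZ) F}
    (h : CorrectPair F L N LZ Fv Fu Hv Hu) (hv : Hv.rank = N) (hu : Hu.rank = N) :
    L ≤ Module.finrank F ↥(rowSpan Hv ⊓ rowSpan Hu) := by
  have inj : ∀ {H : Matrix (Fin N) (Fin LZ) F}, H.rank = N → ∀ p : Fin N → F,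
      p ᵥ* H = 0 → p = 0 := by
    intro H hH p hp
    have hli : LinearIndependent F H.row := by
      rw [linearIndependent_iff_card_eq_finrank_span, Set.finrank,
        ← Matrix.rank_eq_finrank_span_row, hH, Fintype.card_fin]
    exact (Matrix.vecMul_injective_iff.2 hli) (by simpa using hp)
  have := h.finrank_add_le (K := ⊥) bot_le (by
    intro p q hpq hp
    have hp0 : p ᵥ* Hv = 0 := by simpa using hp
    rw [inj hv p hp0, inj hu q (hpq ▸ hp0), Matrix.zero_vecMul, Matrix.zero_vecMul])
  omega

theorem finrank_add_le_inf {F E : Type*} [Field F] [AddCommGroup E] [Module F E]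
    [FiniteDimensional F E] {X Y Z : Submodule F E} (hX : X ≤ Z) (hY : Y ≤ Z) :
    Module.finrank F X + Module.finrank F Y ≤
      Module.finrank F ↥(X ⊓ Y) + Module.finrank F Z := by
  have h1 := Submodule.finrank_sup_add_finrank_inf_eq X Y
  have h2 := Submodule.finrank_mono (sup_le hX hY)
  omega

/-- Along three unqualified pairs `{w, v}`, `{w, t}`, `{u, t}`, security propagates the agreement to
the pair `{u, v}` on any subspace of the row spaces of the two intermediate nodes `w` and `t`. -/
theorem agreeOn_of_secure {F : Type} [Field F] {L N LZ : ℕ}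
    {Fv Fw Ft Fu : Matrix (Fin N) (Fin L) F} {Hv Hw Ht Hu : Matrix (Fin N) (Fin LZ) F}
    (h1 : SecurePair F L N LZ Fw Fv Hw Hv) (h2 : SecurePair F L N LZ Fw Ft Hw Ht)
    (h3 : SecurePair F L N LZ Fu Ft Hu Ht) {K : Submodule F (Fin LZ → F)}
    (hw : K ≤ rowSpan Hw) (ht : K ≤ rowSpan Ht) : AgreeOn Fu Fv Hu Hv K := by
  intro p q hpq hp
  obtain ⟨r, hr⟩ := mem_rowSpan_iff.1 (hw hp)
  obtain ⟨s, hs⟩ := mem_rowSpan_iff.1 (ht hp)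
  rw [h3.vecMul_eq hs.symm, ← h2.vecMul_eq (hr.trans hs.symm), h1.vecMul_eq (hr.trans hpq)]

/-- **Theorem 3, converse half.** For the CDS instance on nodes
`A1, A2, A3, A4, B1, B2, B3, B4` with qualified edges
`{A1,B1}, {A2,B1}, {A3,B1}, {A2,B2}, {A3,B2}, {A3,B3}, {A4,B3}, {A4,B4}` and
unqualified edges `{A1,B2}, {A1,B3}, {A2,B3}, {A2,B4}, {A3,B4}`, every linear CDS
scheme satisfies `9L ≤ 7N`, i.e. the linear rate `L/(2N)` is at most `7/18`. -/
theorem cds_fig3_converse (F : Type) [Field F]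
    (L N LZ : ℕ) (hL : 0 < L) (hN : 0 < N) (hLZ : 0 < LZ)
    (FA1 FA2 FA3 FA4 FB1 FB2 FB3 FB4 : Matrix (Fin N) (Fin L) F)
    (HA1 HA2 HA3 HA4 HB1 HB2 HB3 HB4 : Matrix (Fin N) (Fin LZ) F)
    (hHA1 : HA1.rank = N) (hHA2 : HA2.rank = N) (hHA3 : HA3.rank = N)
    (hHA4 : HA4.rank = N) (hHB1 : HB1.rank = N) (hHB2 : HB2.rank = N)
    (hHB3 : HB3.rank = N) (hHB4 : HB4.rank = N)
    (hq1 : CorrectPair F L N LZ FA1 FB1 HA1 HB1)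
    (hq2 : CorrectPair F L N LZ FA2 FB1 HA2 HB1)
    (hq3 : CorrectPair F L N LZ FA3 FB1 HA3 HB1)
    (hq4 : CorrectPair F L N LZ FA2 FB2 HA2 HB2)
    (hq5 : CorrectPair F L N LZ FA3 FB2 HA3 HB2)
    (hq6 : CorrectPair F L N LZ FA3 FB3 HA3 HB3)
    (hq7 : CorrectPair F L N LZ FA4 FB3 HA4 HB3)
    (hq8 : CorrectPair F L N LZ FA4 FB4 HA4 HB4)
    (hs1 : SecurePair F L N LZ FA1 FB2 HA1 HB2)
    (hs2 : SecurePair F L N LZ FA1 FB3 HA1 HB3)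
    (hs3 : SecurePair F L N LZ FA2 FB3 HA2 HB3)
    (hs4 : SecurePair F L N LZ FA2 FB4 HA2 HB4)
    (hs5 : SecurePair F L N LZ FA3 FB4 HA3 HB4) :
    9 * L ≤ 7 * N := by
  have e1 := hq1.le_finrank hHA1 hHB1
  have e2 := hq2.le_finrank hHA2 hHB1
  have e3 := hq3.le_finrank hHA3 hHB1
  have e5 := hq5.le_finrank hHA3 hHB2
  have e6 := hq6.le_finrank hHA3 hHB3
  have e7 := hq7.le_finrank hHA4 hHB3
  have e8 := hq8.le_finrank hHA4 hHB4
  rw [← finrank_rowSpan] at hHA3 hHA4 hHB1 hHB2 hHB3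
  -- The upper bound `a ≤ 3N - 3L`.
  have k1 := hq6.finrank_add_le
    (K := ((rowSpan HA2 ⊓ rowSpan HA3) ⊓ (rowSpan HA3 ⊓ rowSpan HB3)) ⊓
      (rowSpan HA4 ⊓ rowSpan HB3) ⊓ (rowSpan HA4 ⊓ rowSpan HB4))
    ((inf_le_left.trans inf_le_left).trans inf_le_right)
    (agreeOn_of_secure hs3 hs4 hs5
      (((inf_le_left.trans inf_le_left).trans inf_le_left).trans inf_le_left)
      (inf_le_right.trans inf_le_right))
  have i1 := finrank_add_le_inf (F := F) (X := rowSpan HA2 ⊓ rowSpan HA3)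
    (Y := rowSpan HA3 ⊓ rowSpan HB3) (Z := rowSpan HA3) inf_le_right inf_le_left
  have i2 := finrank_add_le_inf (F := F)
    (X := (rowSpan HA2 ⊓ rowSpan HA3) ⊓ (rowSpan HA3 ⊓ rowSpan HB3))
    (Y := rowSpan HA4 ⊓ rowSpan HB3) (Z := rowSpan HB3)
    (inf_le_right.trans inf_le_right) inf_le_right
  have i3 := finrank_add_le_inf (F := F)
    (X := ((rowSpan HA2 ⊓ rowSpan HA3) ⊓ (rowSpan HA3 ⊓ rowSpan HB3)) ⊓
      (rowSpan HA4 ⊓ rowSpan HB3))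
    (Y := rowSpan HA4 ⊓ rowSpan HB4) (Z := rowSpan HA4)
    (inf_le_right.trans inf_le_left) inf_le_left
  -- The lower bound `a ≥ 6L - 4N`.
  have j1 := finrank_add_le_inf (F := F) (X := rowSpan HA2 ⊓ rowSpan HB1)
    (Y := rowSpan HA3 ⊓ rowSpan HB1) (Z := rowSpan HB1) inf_le_right inf_le_right
  have j2 := finrank_add_le_inf (F := F) (X := rowSpan HA2 ⊓ rowSpan HB2)
    (Y := rowSpan HA3 ⊓ rowSpan HB2) (Z := rowSpan HB2) inf_le_right inf_le_right
  set C1 := (rowSpan HA2 ⊓ rowSpan HB1) ⊓ (rowSpan HA3 ⊓ rowSpan HB1) with hC1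
  set C2 := (rowSpan HA2 ⊓ rowSpan HB2) ⊓ (rowSpan HA3 ⊓ rowSpan HB2) with hC2
  have j3 := finrank_add_le_inf (F := F) (X := C1) (Y := C2) (Z := rowSpan HA2 ⊓ rowSpan HA3)
    (inf_le_inf inf_le_left inf_le_left) (inf_le_inf inf_le_left inf_le_left)
  have j4 := finrank_add_le_inf (F := F) (X := C1 ⊓ C2) (Y := rowSpan HA1 ⊓ rowSpan HB1)
    (Z := rowSpan HB1) (inf_le_left.trans (inf_le_left.trans inf_le_right)) inf_le_right
  have j5 := finrank_add_le_inf (F := F) (X := C1 ⊓ C2 ⊓ (rowSpan HA1 ⊓ rowSpan HB1))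
    (Y := rowSpan HA3 ⊓ rowSpan HB3) (Z := rowSpan HA3)
    (inf_le_left.trans (inf_le_left.trans (inf_le_right.trans inf_le_left))) inf_le_left
  have k2 := hq4.finrank_add_le
    (K := C1 ⊓ C2 ⊓ (rowSpan HA1 ⊓ rowSpan HB1) ⊓ (rowSpan HA3 ⊓ rowSpan HB3))
    (inf_le_left.trans (inf_le_left.trans (inf_le_right.trans inf_le_left)))
    (agreeOn_of_secure hs1 hs2 hs3
      (inf_le_left.trans (inf_le_right.trans inf_le_left))
      (inf_le_right.trans inf_le_right))
  omega
end
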